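/- Let m ≥ 2, let F be an averaging operator, let f : 𝕋_m → ℝ be bounded, and let T > 0. If u₁, u₂ : 𝕋_m × [0,T] → ℝ are bounded and continuous in t for each x, then sup_{(x,t) ∈ 𝕋_m × [0,T]} |K_f u₁(x,t) − K_f u₂(x,t)| ≤ (1 − e^{−T}) · sup_{(x,t) ∈ 𝕋_m × [0,T]} |u₁(x,t) − u₂(x,t)|. -/

import Mathlib

open MeasureTheory Real

/-- `F : ℝ^m → ℝ` is an averaging operator: continuous, `F(0,…,0)=0`, `F(1,…,1)=1`,
positively homogeneous, translation equivariant, strictly below the max when the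
coordinates are not all equal, and nondecreasing in each variable. -/
def IsAveraging (m : ℕ) (F : (Fin m → ℝ) → ℝ) : Prop :=
  Continuous F ∧
  F (fun _ => 0) = 0 ∧
  F (fun _ => 1) = 1 ∧
  (∀ (t : ℝ) (x : Fin m → ℝ), F (fun j => t * x j) = t * F x) ∧
  (∀ (t : ℝ) (x : Fin m → ℝ), F (fun j => t + x j) = t + F x) ∧
  (∀ x : Fin m → ℝ, (∃ i j, x i ≠ x j) → F x < ⨆ j, x j) ∧
  (∀ x y : Fin m → ℝ, (∀ j, x j ≤ y j) → F x ≤ F y)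

/-- The operator `K_f u(x,t) = ∫₀ᵗ e^{z−t} F(u((x,0),z),…,u((x,m−1),z)) dz + e^{−t} f(x)`,
where vertices of the directed tree `𝕋_m` are modeled as lists over `Fin m`
and `(x,i)` is the successor `x ++ [i]`. -/
noncomputable def Kop (m : ℕ) (F : (Fin m → ℝ) → ℝ) (f : List (Fin m) → ℝ)
    (u : List (Fin m) → ℝ → ℝ) (x : List (Fin m)) (t : ℝ) : ℝ :=
  (∫ z in (0:ℝ)..t, Real.exp (z - t) * F (fun i => u (x ++ [i]) z)) +
    Real.exp (-t) * f x

/-- `K_f` is a contraction on `𝕋_m × [0,T]` with constant `1 − e^{−T}`. -/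
theorem statement7 (m : ℕ) (hm : 2 ≤ m) (F : (Fin m → ℝ) → ℝ) (hF : IsAveraging m F)
    (f : List (Fin m) → ℝ) (hf : ∃ M : ℝ, ∀ x, |f x| ≤ M)
    (T : ℝ) (hT : 0 < T)
    (u₁ u₂ : List (Fin m) → ℝ → ℝ)
    (hb₁ : ∃ M : ℝ, ∀ x, ∀ t ∈ Set.Icc (0:ℝ) T, |u₁ x t| ≤ M)
    (hb₂ : ∃ M : ℝ, ∀ x, ∀ t ∈ Set.Icc (0:ℝ) T, |u₂ x t| ≤ M)
    (hc₁ : ∀ x, ContinuousOn (u₁ x) (Set.Icc (0:ℝ) T))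
    (hc₂ : ∀ x, ContinuousOn (u₂ x) (Set.Icc (0:ℝ) T)) :
    (⨆ x : List (Fin m), ⨆ t : Set.Icc (0:ℝ) T,
        |Kop m F f u₁ x (t : ℝ) - Kop m F f u₂ x (t : ℝ)|) ≤
      (1 - Real.exp (-T)) *
        ⨆ x : List (Fin m), ⨆ t : Set.Icc (0:ℝ) T, |u₁ x (t : ℝ) - u₂ x (t : ℝ)| := by
  obtain ⟨hFc, -, -, -, hFt, -, hFm⟩ := hF
  obtain ⟨M₁, hM₁⟩ := hb₁
  obtain ⟨M₂, hM₂⟩ := hb₂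
  haveI : Nonempty (Set.Icc (0:ℝ) T) := ⟨⟨0, le_refl _, hT.le⟩⟩
  set S := ⨆ x : List (Fin m), ⨆ t : Set.Icc (0:ℝ) T, |u₁ x (t : ℝ) - u₂ x (t : ℝ)| with hSdef
  have hbd : ∀ x, ∀ t : Set.Icc (0:ℝ) T, |u₁ x (t : ℝ) - u₂ x (t : ℝ)| ≤ M₁ + M₂ := by
    intro x t
    have h1 := hM₁ x t t.2
    have h2 := hM₂ x t t.2
    exact (abs_sub _ _).trans (add_le_add h1 h2)
  have hS : ∀ x, ∀ t ∈ Set.Icc (0:ℝ) T, |u₁ x t - u₂ x t| ≤ S := by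
    intro x t ht
    have h1 : |u₁ x t - u₂ x t| ≤ ⨆ t : Set.Icc (0:ℝ) T, |u₁ x (t : ℝ) - u₂ x (t : ℝ)| :=
      le_ciSup (f := fun t : Set.Icc (0:ℝ) T => |u₁ x (t : ℝ) - u₂ x (t : ℝ)|)
        ⟨M₁ + M₂, by rintro _ ⟨t, rfl⟩; exact hbd x t⟩ ⟨t, ht⟩
    refine h1.trans (le_ciSup (f := fun x => ⨆ t : Set.Icc (0:ℝ) T, |u₁ x (t : ℝ) - u₂ x (t : ℝ)|)
      ⟨M₁ + M₂, ?_⟩ x)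
    rintro _ ⟨y, rfl⟩
    exact ciSup_le (hbd y)
  have hS0 : 0 ≤ S := (abs_nonneg _).trans (hS [] 0 ⟨le_refl _, hT.le⟩)
  have hFl : ∀ a b : Fin m → ℝ, (∀ j, |a j - b j| ≤ S) → |F a - F b| ≤ S := by
    intro a b h
    have h1 : F a ≤ S + F b := by
      rw [← hFt]
      exact hFm _ _ fun j => by linarith [(abs_le.1 (h j)).2]
    have h2 : F b ≤ S + F a := by
      rw [← hFt]
      exact hFm _ _ fun j => by linarith [(abs_le.1 (h j)).1]
    exact abs_le.2 ⟨by linarith, by linarith⟩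
  refine ciSup_le fun x => ciSup_le fun t => ?_
  obtain ⟨t, ht0, htT⟩ := t
  show |Kop m F f u₁ x t - Kop m F f u₂ x t| ≤ _
  have hint : ∀ u : List (Fin m) → ℝ → ℝ, (∀ x, ContinuousOn (u x) (Set.Icc (0:ℝ) T)) →
      IntervalIntegrable (fun z => Real.exp (z - t) * F (fun i => u (x ++ [i]) z)) volume 0 t := by
    intro u hu
    apply ContinuousOn.intervalIntegrable
    rw [Set.uIcc_of_le ht0]
    refine ContinuousOn.mul (by fun_prop) (hFc.comp_continuousOn (continuousOn_pi.2 fun i => ?_))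
    exact (hu _).mono (Set.Icc_subset_Icc_right htT)
  have hexp : ∫ z in (0:ℝ)..t, Real.exp (z - t) * S = (1 - Real.exp (-t)) * S := by
    rw [intervalIntegral.integral_mul_const, intervalIntegral.integral_comp_sub_right
      (fun z => Real.exp z), integral_exp]
    simp
  have hK : |Kop m F f u₁ x t - Kop m F f u₂ x t| ≤ (1 - Real.exp (-t)) * S := by
    unfold Kop
    rw [add_sub_add_right_eq_sub, ← intervalIntegral.integral_sub (hint u₁ hc₁) (hint u₂ hc₂),
      ← hexp, ← Real.norm_eq_abs]
    refine intervalIntegral.norm_integral_le_of_norm_le ht0 (Filter.Eventually.of_forall ?_)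
      (Continuous.intervalIntegrable (by fun_prop) _ _)
    intro z hz
    rw [← mul_sub, norm_mul, Real.norm_eq_abs, Real.norm_eq_abs, abs_of_pos (Real.exp_pos _)]
    exact mul_le_mul_of_nonneg_left
      (hFl _ _ fun j => hS _ _ ⟨hz.1.le, hz.2.trans htT⟩) (Real.exp_pos _).le
  refine hK.trans (mul_le_mul_of_nonneg_right ?_ hS0)
  have : Real.exp (-T) ≤ Real.exp (-t) := Real.exp_le_exp.2 (by linarith)
  linarith
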